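/- arXiv:2103.03967 — 2 statements merged into one kernel-verified Lean document; each statement's English description precedes it below -/
import Mathlib

section
/- Let m, n ∈ ℕ and let φ : ℕ → ℝ^{m×n} be a matrix kernel with Σ_{k} ‖φ_k‖_F² < ∞ (square-summable Frobenius norms). Let Φ be the associated causal LTI convolution operator, (Φw)_t = Σ_{k=0}^{t} φ_k · w_{t−k}. Then for every w in ℓ¹ₙ, Φw lies in ℓ²ₘ, and the induced ℓ²←ℓ¹ norm of Φ satisfies the exact identity sup { ‖Φw‖₂ : w ∈ ℓ¹ₙ, ‖w‖₁ ≤ 1 } = max_{i ∈ {1,…,n}} √( Σ_{k=0}^{∞} Σ_{j=1}^{m} ((φ_k)_{j,i})² ), i.e., the operator norm equals the largest Frobenius norm among the columns of the stacked kernel. -/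
/-- The causal LTI convolution operator with matrix kernel `φ`:
`(Φw)_t = Σ_{k=0}^{t} φ_k · w_{t−k}`. -/
def ltiConv {m n : ℕ} (φ : ℕ → Matrix (Fin m) (Fin n) ℝ)
    (w : ℕ → Fin n → ℝ) (t : ℕ) : Fin m → ℝ :=
  ∑ k ∈ Finset.range (t + 1), (φ k).mulVec (w (t - k))

theorem aux_shift (F : ℕ → ℝ) (hF : ∀ k, 0 ≤ F k) (hs : Summable F) (T s : ℕ) :
    ∑ t ∈ Finset.range T, (if s ≤ t then F (t - s) else 0) ≤ ∑' k, F k := by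
  by_cases h : s ≤ T
  · obtain ⟨d, rfl⟩ := Nat.exists_eq_add_of_le h
    rw [Finset.sum_range_add]
    have h1 : ∑ t ∈ Finset.range s, (if s ≤ t then F (t - s) else 0) = 0 := by
      apply Finset.sum_eq_zero
      intro t ht
      have := Finset.mem_range.mp ht
      rw [if_neg (by omega)]
    rw [h1, zero_add]
    simp only [Nat.le_add_right, if_true, Nat.add_sub_cancel_left]
    exact hs.sum_le_tsum _ (fun k _ => hF k)
  · have h1 : ∑ t ∈ Finset.range T, (if s ≤ t then F (t - s) else 0) = 0 := by
      apply Finset.sum_eq_zero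
      intro t ht
      have := Finset.mem_range.mp ht
      rw [if_neg (by omega)]
    rw [h1]
    exact tsum_nonneg hF

theorem aux_conv {m n : ℕ} (φ : ℕ → Matrix (Fin m) (Fin n) ℝ)
    (w : ℕ → Fin n → ℝ) (T t : ℕ) (ht : t < T) (j : Fin m) :
    ltiConv φ w t j = ∑ p ∈ Finset.range T ×ˢ (Finset.univ : Finset (Fin n)),
      w p.1 p.2 * (if p.1 ≤ t then φ (t - p.1) j p.2 else 0) := by
  rw [Finset.sum_product]
  obtain ⟨d, rfl⟩ := Nat.exists_eq_add_of_le (Nat.succ_le_of_lt ht)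
  rw [Finset.sum_range_add]
  have h2 : ∑ x ∈ Finset.range d, ∑ i : Fin n, w (t.succ + x) i *
      (if t.succ + x ≤ t then φ (t - (t.succ + x)) j i else 0) = 0 := by
    apply Finset.sum_eq_zero
    intro x _
    apply Finset.sum_eq_zero
    intro i _
    rw [if_neg (by omega), mul_zero]
  simp only [h2, add_zero]
  unfold ltiConv
  rw [Finset.sum_apply, ← Finset.sum_range_reflect]
  apply Finset.sum_congr rfl
  intro s hs
  have hs' : s ≤ t := by have := Finset.mem_range.mp hs; omega
  simp only [Matrix.mulVec, dotProduct]
  apply Finset.sum_congr rfl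
  intro i _
  rw [if_pos hs', show t - (t + 1 - 1 - s) = s by omega, show t + 1 - 1 - s = t - s by omega,
    mul_comm]

theorem aux_bound {m n : ℕ} (φ : ℕ → Matrix (Fin m) (Fin n) ℝ)
    (hc : ∀ i, Summable fun k => ∑ j : Fin m, (φ k j i) ^ 2) (B : ℝ) (hB0 : 0 ≤ B)
    (hB : ∀ i, ∑' k, ∑ j : Fin m, (φ k j i) ^ 2 ≤ B)
    (w : ℕ → Fin n → ℝ) (hw : Summable (fun p : ℕ × Fin n => |w p.1 p.2|)) (T : ℕ) :
    ∑ t ∈ Finset.range T, ∑ j : Fin m, (ltiConv φ w t j) ^ 2 ≤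
      B * (∑' p : ℕ × Fin n, |w p.1 p.2|) ^ 2 := by
  set W := ∑' p : ℕ × Fin n, |w p.1 p.2| with hW
  have hW0 : 0 ≤ W := tsum_nonneg fun _ => abs_nonneg _
  set S := Finset.range T ×ˢ (Finset.univ : Finset (Fin n)) with hS
  have hSW : ∑ p ∈ S, |w p.1 p.2| ≤ W := hw.sum_le_tsum _ (fun _ _ => abs_nonneg _)
  have step : ∀ t ∈ Finset.range T, ∀ j : Fin m, (ltiConv φ w t j) ^ 2 ≤
      W * ∑ p ∈ S, |w p.1 p.2| * (if p.1 ≤ t then φ (t - p.1) j p.2 ^ 2 else 0) := by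
    intro t ht j
    rw [aux_conv φ w T t (Finset.mem_range.mp ht) j]
    have hn : ∀ p ∈ S, 0 ≤ |w p.1 p.2| * (if p.1 ≤ t then φ (t - p.1) j p.2 ^ 2 else 0) := by
      intro p _
      split_ifs <;> positivity
    refine le_trans (Finset.sum_sq_le_sum_mul_sum_of_sq_eq_mul S
      (f := fun p => |w p.1 p.2|)
      (g := fun p => |w p.1 p.2| * (if p.1 ≤ t then φ (t - p.1) j p.2 ^ 2 else 0))
      (fun _ _ => abs_nonneg _) hn ?_) ?_
    · intro p _
      split_ifs
      · rw [← mul_assoc, abs_mul_abs_self]; ring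
      · simp
    · exact mul_le_mul_of_nonneg_right hSW (Finset.sum_nonneg hn)
  calc _ ≤ ∑ t ∈ Finset.range T, ∑ j : Fin m,
        W * ∑ p ∈ S, |w p.1 p.2| * (if p.1 ≤ t then φ (t - p.1) j p.2 ^ 2 else 0) :=
        Finset.sum_le_sum fun t ht => Finset.sum_le_sum fun j _ => step t ht j
    _ = W * ∑ p ∈ S, |w p.1 p.2| * ∑ t ∈ Finset.range T,
          (if p.1 ≤ t then (fun k => ∑ j : Fin m, φ k j p.2 ^ 2) (t - p.1) else 0) := by
        simp only [← Finset.mul_sum]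
        congr 1
        have : ∀ t ∈ Finset.range T, ∑ j : Fin m, ∑ p ∈ S,
            |w p.1 p.2| * (if p.1 ≤ t then φ (t - p.1) j p.2 ^ 2 else 0) =
            ∑ p ∈ S, |w p.1 p.2| * 
              (if p.1 ≤ t then (fun k => ∑ j : Fin m, φ k j p.2 ^ 2) (t - p.1) else 0) := by
          intro t _
          rw [Finset.sum_comm]
          apply Finset.sum_congr rfl
          intro p _
          rw [← Finset.mul_sum]
          split_ifs <;> simp
        rw [Finset.sum_congr rfl this, Finset.sum_comm]
        simp only [← Finset.mul_sum]
    _ ≤ W * ∑ p ∈ S, |w p.1 p.2| * B := by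
        apply mul_le_mul_of_nonneg_left _ hW0
        apply Finset.sum_le_sum
        intro p _
        apply mul_le_mul_of_nonneg_left _ (abs_nonneg _)
        exact (aux_shift _ (fun k => Finset.sum_nonneg fun j _ => sq_nonneg _) (hc p.2) T p.1).trans
          (hB p.2)
    _ ≤ B * W ^ 2 := by
        rw [← Finset.sum_mul]
        nlinarith [mul_le_mul_of_nonneg_left hSW (mul_nonneg hW0 hB0)]

/-- Lemma 2: for a causal LTI convolution operator `Φ` with
square-summable kernel, `Φ` maps `ℓ¹ₙ` into `ℓ²ₘ` and its induced `ℓ²←ℓ¹` norm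
equals the largest Frobenius norm among the columns of the stacked kernel. -/
theorem lti_two_from_one_norm
    (m n : ℕ) (φ : ℕ → Matrix (Fin m) (Fin n) ℝ)
    (hφ : Summable fun k => ∑ j : Fin m, ∑ i : Fin n, (φ k j i) ^ 2) :
    (∀ w : ℕ → Fin n → ℝ,
      Summable (fun p : ℕ × Fin n => |w p.1 p.2|) →
      Summable (fun t => ∑ j : Fin m, (ltiConv φ w t j) ^ 2)) ∧
    sSup {r : ℝ | ∃ w : ℕ → Fin n → ℝ,
        Summable (fun p : ℕ × Fin n => |w p.1 p.2|) ∧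
        (∑' p : ℕ × Fin n, |w p.1 p.2|) ≤ 1 ∧
        r = Real.sqrt (∑' t : ℕ, ∑ j : Fin m, (ltiConv φ w t j) ^ 2)} =
      ⨆ i : Fin n, Real.sqrt (∑' k : ℕ, ∑ j : Fin m, (φ k j i) ^ 2) := by
  have hc : ∀ i, Summable fun k => ∑ j : Fin m, (φ k j i) ^ 2 := by
    intro i
    refine Summable.of_nonneg_of_le (fun k => Finset.sum_nonneg fun j _ => sq_nonneg _) ?_ hφ
    intro k
    exact Finset.sum_le_sum fun j _ => Finset.single_le_sum
      (f := fun i => φ k j i ^ 2) (fun i _ => sq_nonneg _) (Finset.mem_univ i)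
  set M := ⨆ i : Fin n, Real.sqrt (∑' k : ℕ, ∑ j : Fin m, (φ k j i) ^ 2) with hM
  have hM0 : 0 ≤ M := Real.iSup_nonneg fun i => Real.sqrt_nonneg _
  have hB : ∀ i, ∑' k, ∑ j : Fin m, (φ k j i) ^ 2 ≤ M ^ 2 := by
    intro i
    rw [← Real.sqrt_le_left hM0]
    exact le_ciSup (f := fun i : Fin n => Real.sqrt (∑' k : ℕ, ∑ j : Fin m, (φ k j i) ^ 2))
      (Set.finite_range _).bddAbove i
  have hb := aux_bound φ hc (M ^ 2) (sq_nonneg _) hB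
  have hnn : ∀ w : ℕ → Fin n → ℝ, ∀ t, 0 ≤ ∑ j : Fin m, (ltiConv φ w t j) ^ 2 :=
    fun w t => Finset.sum_nonneg fun j _ => sq_nonneg _
  refine ⟨fun w hw => summable_of_sum_range_le (hnn w) (hb w hw), ?_⟩
  have hub : ∀ r ∈ {r : ℝ | ∃ w : ℕ → Fin n → ℝ,
        Summable (fun p : ℕ × Fin n => |w p.1 p.2|) ∧
        (∑' p : ℕ × Fin n, |w p.1 p.2|) ≤ 1 ∧
        r = Real.sqrt (∑' t : ℕ, ∑ j : Fin m, (ltiConv φ w t j) ^ 2)}, r ≤ M := by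
    rintro r ⟨w, hw, hw1, rfl⟩
    rw [Real.sqrt_le_left hM0]
    refine (Real.tsum_le_of_sum_range_le (hnn w) (hb w hw)).trans ?_
    have hW0 : 0 ≤ ∑' p : ℕ × Fin n, |w p.1 p.2| := tsum_nonneg fun _ => abs_nonneg _
    have : (∑' p : ℕ × Fin n, |w p.1 p.2|) ^ 2 ≤ 1 := pow_le_one₀ hW0 hw1
    nlinarith [sq_nonneg M]
  apply le_antisymm
  · exact Real.sSup_le hub hM0
  · refine Real.iSup_le (fun i => ?_) (Real.sSup_nonneg ?_)
    · apply le_csSup ⟨M, hub⟩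
      have hs : HasSum (fun p : ℕ × Fin n => |if p.1 = 0 ∧ p.2 = i then (1 : ℝ) else 0|) 1 := by
        have := hasSum_single (f := fun p : ℕ × Fin n =>
          |if p.1 = 0 ∧ p.2 = i then (1 : ℝ) else 0|) (0, i) (by
            rintro ⟨a, b⟩ hab
            have : ¬ (a = 0 ∧ b = i) := fun h => hab (by rw [h.1, h.2])
            simp [this])
        simpa using this
      refine ⟨fun t i' => if t = 0 ∧ i' = i then 1 else 0, hs.summable, hs.tsum_eq.le, ?_⟩
      congr 1
      apply tsum_congr
      intro t
      apply Finset.sum_congr rfl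
      intro j _
      congr 1
      rw [aux_conv φ _ (t + 1) t (Nat.lt_succ_self t) j, Finset.sum_eq_single (0, i)]
      · simp
      · rintro ⟨a, b⟩ _ hab
        have : ¬ (a = 0 ∧ b = i) := fun h => hab (by rw [h.1, h.2])
        simp [this]
      · intro h
        simp at h
    · rintro r ⟨w, _, _, rfl⟩
      exact Real.sqrt_nonneg _
end

section
/- Let m, n ∈ ℕ and let φ : ℕ → ℝ^{m×n} be a matrix kernel with Σ_{k} ‖φ_k‖_F² < ∞. Let Φ be the associated causal LTI convolution operator, (Φw)_t = Σ_{k=0}^{t} φ_k · w_{t−k}, and set c := max_{i ∈ {1,…,n}} √( Σ_{k=0}^{∞} Σ_{j=1}^{m} ((φ_k)_{j,i})² ). Then for every w ∈ ℓ¹ₙ the output sequence Φw lies in ℓ²ₘ and satisfies ‖Φw‖₂ ≤ c · ‖w‖₁. -/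
/-- upper-bound direction of Lemma 2: for a causal LTI convolution
operator `Φ` with square-summable kernel and
`c := max_i √(Σ_k Σ_j ((φ_k)_{j,i})²)`, every `w ∈ ℓ¹ₙ` gives `Φw ∈ ℓ²ₘ` with
`‖Φw‖₂ ≤ c · ‖w‖₁`. -/
theorem lti_two_from_one_bound
    (m n : ℕ) (φ : ℕ → Matrix (Fin m) (Fin n) ℝ)
    (hφ : Summable fun k => ∑ j : Fin m, ∑ i : Fin n, (φ k j i) ^ 2)
    (c : ℝ)
    (hc : c = ⨆ i : Fin n, Real.sqrt (∑' k : ℕ, ∑ j : Fin m, (φ k j i) ^ 2)) :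
    ∀ w : ℕ → Fin n → ℝ,
      Summable (fun p : ℕ × Fin n => |w p.1 p.2|) →
      Summable (fun t => ∑ j : Fin m, (ltiConv φ w t j) ^ 2) ∧
      Real.sqrt (∑' t : ℕ, ∑ j : Fin m, (ltiConv φ w t j) ^ 2) ≤
        c * ∑' p : ℕ × Fin n, |w p.1 p.2| := by
  intro w hw
  set W := ∑' p : ℕ × Fin n, |w p.1 p.2| with hW
  have hW0 : 0 ≤ W := tsum_nonneg fun _ => abs_nonneg _
  have hsum : ∀ i : Fin n, Summable fun k => ∑ j : Fin m, (φ k j i) ^ 2 := by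
    intro i
    refine Summable.of_nonneg_of_le (fun k => Finset.sum_nonneg fun j _ => sq_nonneg _) (fun k => ?_) hφ
    refine Finset.sum_le_sum fun j _ => ?_
    exact Finset.single_le_sum (f := fun i => (φ k j i) ^ 2) (fun i _ => sq_nonneg _)
      (Finset.mem_univ i)
  have hc0 : 0 ≤ c := by
    rw [hc]
    exact Real.iSup_nonneg fun i => Real.sqrt_nonneg _
  have hci : ∀ (i : Fin n) (T : ℕ), ∑ k ∈ Finset.range T, ∑ j : Fin m, (φ k j i) ^ 2 ≤ c ^ 2 := by
    intro i T
    have h1 : Real.sqrt (∑' k : ℕ, ∑ j : Fin m, (φ k j i) ^ 2) ≤ c := by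
      rw [hc]
      exact le_ciSup (f := fun i : Fin n => Real.sqrt (∑' k : ℕ, ∑ j : Fin m, (φ k j i) ^ 2))
        (Set.finite_range _).bddAbove i
    exact ((hsum i).sum_le_tsum _ (fun k _ => Finset.sum_nonneg fun j _ => sq_nonneg _)).trans
      ((Real.sqrt_le_left hc0).1 h1)
  have hWT : ∀ T : ℕ, ∑ s ∈ Finset.range T, ∑ i : Fin n, |w s i| ≤ W := by
    intro T
    rw [← Finset.sum_product' (Finset.range T) Finset.univ (fun s i => |w s i|)]
    exact hw.sum_le_tsum _ fun _ _ => abs_nonneg _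
  have hCS : ∀ t j, (ltiConv φ w t j) ^ 2 ≤
      W * ∑ k ∈ Finset.range (t + 1), ∑ i : Fin n, |w (t - k) i| * (φ k j i) ^ 2 := by
    intro t j
    have e : ltiConv φ w t j =
        ∑ p ∈ Finset.range (t + 1) ×ˢ (Finset.univ : Finset (Fin n)),
          φ p.1 j p.2 * w (t - p.1) p.2 := by
      rw [Finset.sum_product]
      simp [ltiConv, Matrix.mulVec, dotProduct, Finset.sum_apply]
    have h := Finset.sum_sq_le_sum_mul_sum_of_sq_eq_mul
      (Finset.range (t + 1) ×ˢ (Finset.univ : Finset (Fin n)))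
      (r := fun p => φ p.1 j p.2 * w (t - p.1) p.2)
      (f := fun p => |w (t - p.1) p.2|)
      (g := fun p => |w (t - p.1) p.2| * (φ p.1 j p.2) ^ 2)
      (fun p _ => abs_nonneg _) (fun p _ => by positivity)
      (fun p _ => by rw [mul_pow, ← sq_abs (w _ _)]; ring)
    rw [e]
    refine h.trans ?_
    rw [Finset.sum_product, Finset.sum_product]
    refine mul_le_mul_of_nonneg_right ?_ (by positivity)
    refine le_trans (le_of_eq ?_) (hWT (t + 1))
    exact Finset.sum_range_reflect (fun s => ∑ i : Fin n, |w s i|) (t + 1)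
  have key : ∀ T : ℕ, ∑ t ∈ Finset.range T, ∑ j : Fin m, (ltiConv φ w t j) ^ 2 ≤ (c * W) ^ 2 := by
    intro T
    calc ∑ t ∈ Finset.range T, ∑ j : Fin m, (ltiConv φ w t j) ^ 2
        ≤ ∑ t ∈ Finset.range T, ∑ j : Fin m,
          W * ∑ k ∈ Finset.range (t + 1), ∑ i : Fin n, |w (t - k) i| * (φ k j i) ^ 2 :=
          Finset.sum_le_sum fun t _ => Finset.sum_le_sum fun j _ => hCS t j
      _ = W * ∑ t ∈ Finset.range T, ∑ k ∈ Finset.range (t + 1),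
            ∑ i : Fin n, |w (t - k) i| * ∑ j : Fin m, (φ k j i) ^ 2 := by
          rw [Finset.mul_sum]
          refine Finset.sum_congr rfl fun t _ => ?_
          rw [← Finset.mul_sum, Finset.sum_comm]
          congr 1
          refine Finset.sum_congr rfl fun k _ => ?_
          rw [Finset.sum_comm]
          simp only [Finset.mul_sum]
      _ = W * ∑ k ∈ Finset.range T, ∑ s ∈ Finset.range (T - k),
            ∑ i : Fin n, |w s i| * ∑ j : Fin m, (φ k j i) ^ 2 := by
          rw [Finset.sum_range_diag_flip T
            (fun k s => ∑ i : Fin n, |w s i| * ∑ j : Fin m, (φ k j i) ^ 2)]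
      _ ≤ W * ∑ k ∈ Finset.range T, ∑ s ∈ Finset.range T,
            ∑ i : Fin n, |w s i| * ∑ j : Fin m, (φ k j i) ^ 2 := by
          refine mul_le_mul_of_nonneg_left (Finset.sum_le_sum fun k _ => ?_) hW0
          refine Finset.sum_le_sum_of_subset_of_nonneg
            (Finset.range_mono (Nat.sub_le _ _)) fun s _ _ => by positivity
      _ = W * ∑ s ∈ Finset.range T, ∑ i : Fin n,
            |w s i| * ∑ k ∈ Finset.range T, ∑ j : Fin m, (φ k j i) ^ 2 := by
          rw [Finset.sum_comm]
          congr 1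
          refine Finset.sum_congr rfl fun s _ => ?_
          rw [Finset.sum_comm]
          refine Finset.sum_congr rfl fun i _ => ?_
          rw [← Finset.mul_sum]
      _ ≤ W * ∑ s ∈ Finset.range T, ∑ i : Fin n, |w s i| * c ^ 2 := by
          refine mul_le_mul_of_nonneg_left (Finset.sum_le_sum fun s _ =>
            Finset.sum_le_sum fun i _ => ?_) hW0
          exact mul_le_mul_of_nonneg_left (hci i T) (abs_nonneg _)
      _ = W * ((∑ s ∈ Finset.range T, ∑ i : Fin n, |w s i|) * c ^ 2) := by
          simp only [Finset.sum_mul]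
      _ ≤ W * (W * c ^ 2) := by
          exact mul_le_mul_of_nonneg_left
            (mul_le_mul_of_nonneg_right (hWT T) (sq_nonneg _)) hW0
      _ = (c * W) ^ 2 := by ring
  have hn : ∀ t, 0 ≤ ∑ j : Fin m, (ltiConv φ w t j) ^ 2 :=
    fun t => Finset.sum_nonneg fun j _ => sq_nonneg _
  refine ⟨summable_of_sum_range_le hn key, ?_⟩
  exact (Real.sqrt_le_left (mul_nonneg hc0 hW0)).2 (Real.tsum_le_of_sum_range_le hn key)
end
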